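/- Let -1 < α < -1/2 ≤ β. Then for all t > 0 and θ, φ ∈ [0,π], 𝓗_t^{α,β}(θ,φ) = ∫_{[-1,1]} ∫_{(-1,1)} (−∂_u Ψ^{α,β}(t,θ,φ,u,v)) Π_α(u) du dΠ_β(v) + ∫_{[-1,1]} ∫_{[-1,1]} Ψ^{α,β}(t,θ,φ,u,v) dΠ_{-1/2}(u) dΠ_β(v). -/

import Mathlib

open MeasureTheory Real Set
open scoped ENNReal Classical

noncomputable def cab (α β : ℝ) : ℝ :=
  Real.Gamma (α + β + 2) / (2 ^ (α + β + 1) * Real.Gamma (α + 1) * Real.Gamma (β + 1))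

noncomputable def F4 (a₁ a₂ b₁ b₂ x y : ℝ) : ℝ :=
  ∑' p : ℕ × ℕ,
    (Polynomial.eval a₁ (ascPochhammer ℝ (p.1 + p.2)) *
      Polynomial.eval a₂ (ascPochhammer ℝ (p.1 + p.2))) /
    (Polynomial.eval b₁ (ascPochhammer ℝ p.1) * Polynomial.eval b₂ (ascPochhammer ℝ p.2) *
      (Nat.factorial p.1) * (Nat.factorial p.2)) * x ^ p.1 * y ^ p.2

noncomputable def Hker (α β t θ φ : ℝ) : ℝ :=
  cab α β * Real.sinh (t / 2) / Real.cosh (t / 2) ^ (α + β + 2) *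
    F4 ((α + β + 2) / 2) ((α + β + 3) / 2) (α + 1) (β + 1)
      ((Real.sin (θ / 2) * Real.sin (φ / 2) / Real.cosh (t / 2)) ^ 2)
      ((Real.cos (θ / 2) * Real.cos (φ / 2) / Real.cosh (t / 2)) ^ 2)

noncomputable def qf (θ φ u v : ℝ) : ℝ :=
  1 - u * Real.sin (θ / 2) * Real.sin (φ / 2) - v * Real.cos (θ / 2) * Real.cos (φ / 2)

noncomputable def Psi (α β t θ φ u v : ℝ) : ℝ :=
  cab α β * Real.sinh (t / 2) / (Real.cosh (t / 2) - 1 + qf θ φ u v) ^ (α + β + 2)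

noncomputable def PsiE (α β t θ φ u v : ℝ) : ℝ :=
  (Psi α β t θ φ u v + Psi α β t θ φ (-u) v + Psi α β t θ φ u (-v) +
    Psi α β t θ φ (-u) (-v)) / 4

noncomputable def PiMeas (ν : ℝ) : Measure ℝ :=
  if ν = -(1/2) then (2⁻¹ : ℝ≥0∞) • (Measure.dirac (-1) + Measure.dirac 1)
  else (volume.restrict (Icc (-1 : ℝ) 1)).withDensity
    (fun u => ENNReal.ofReal
      (Real.Gamma (ν + 1) / (Real.sqrt π * Real.Gamma (ν + 1/2)) * (1 - u ^ 2) ^ (ν - 1/2)))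

noncomputable def PiFun (γ u : ℝ) : ℝ :=
  Real.Gamma (γ + 1) / (Real.sqrt π * Real.Gamma (γ + 1/2)) *
    ∫ w in (0 : ℝ)..u, (1 - w ^ 2) ^ (γ - 1/2)

noncomputable def PiInt (ν : ℝ) (S : Set ℝ) (f : ℝ → ℝ) : ℝ :=
  if ν = -(1/2) then
    ((if (-1 : ℝ) ∈ S then f (-1) else 0) + (if (1 : ℝ) ∈ S then f 1 else 0)) / 2
  else ∫ u in S, f u *
    (Real.Gamma (ν + 1) / (Real.sqrt π * Real.Gamma (ν + 1/2)) * (1 - u ^ 2) ^ (ν - 1/2))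

noncomputable def muab (α β : ℝ) : Measure ℝ :=
  (volume.restrict (Icc (0 : ℝ) π)).withDensity
    (fun θ => ENNReal.ofReal (Real.sin (θ / 2) ^ (2 * α + 1) * Real.cos (θ / 2) ^ (2 * β + 1)))

def ballI (θ r : ℝ) : Set ℝ := Ioo (θ - r) (θ + r) ∩ Icc 0 π

section Pochhammer

lemma ascPochhammer_eval_two_mul (s : ℝ) (n : ℕ) :
    (ascPochhammer ℝ (2 * n)).eval s =
      4 ^ n * (ascPochhammer ℝ n).eval (s / 2) * (ascPochhammer ℝ n).eval ((s + 1) / 2) := by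
  induction n with
  | zero => simp
  | succ n ih =>
    rw [show 2 * (n + 1) = 2 * n + 1 + 1 by ring, ascPochhammer_succ_eval,
      ascPochhammer_succ_eval, ih, ascPochhammer_succ_eval, ascPochhammer_succ_eval]
    push_cast
    ring

lemma factorial_two_mul_eq_ascPochhammer (n : ℕ) :
    ((2 * n).factorial : ℝ) = 4 ^ n * n.factorial * (ascPochhammer ℝ n).eval (1 / 2) := by
  have h := ascPochhammer_eval_two_mul 1 n
  rw [ascPochhammer_eval_one, show ((1 : ℝ) + 1) / 2 = 1 by norm_num,
    ascPochhammer_eval_one] at h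
  rw [h]
  ring

lemma ascPochhammer_eval_succ_left (s : ℝ) (n : ℕ) :
    (ascPochhammer ℝ (n + 1)).eval s = s * (ascPochhammer ℝ n).eval (s + 1) := by
  simp [ascPochhammer_succ_left, Polynomial.eval_comp]

lemma hasSum_one_sub_rpow_neg (s : ℝ) {x : ℝ} (hx : |x| < 1) :
    HasSum (fun n : ℕ => (ascPochhammer ℝ n).eval s / n.factorial * x ^ n) ((1 - x) ^ (-s)) := by
  have h := (Real.one_div_one_sub_rpow_hasFPowerSeriesOnBall_zero s).hasSum
    (y := x) (by simpa [← ofReal_norm] using hx)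
  have hx' : 0 < 1 - x := by linarith [(abs_lt.1 hx).2]
  rw [zero_add, one_div, ← Real.rpow_neg hx'.le] at h
  refine h.congr_fun ?_ 
  intro n
  rw [FormalMultilinearSeries.ofScalars_apply_eq, ← Ring.multichoose_eq, smul_eq_mul]
  congr 1
  rw [div_eq_iff (by positivity), eq_comm, mul_comm, ← nsmul_eq_mul,
    Ring.factorial_nsmul_multichoose_eq_ascPochhammer, ← ascPochhammer_map (Nat.castRingHom ℝ),
    Polynomial.eval_map, Polynomial.smeval_def,
    Polynomial.eval₂_eq_sum]
  simp [Polynomial.sum, Polynomial.smul_pow]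

lemma sum_antidiagonal_binomial (c a b : ℝ) (n : ℕ) :
    ∑ p ∈ Finset.HasAntidiagonal.antidiagonal n, c / (p.1.factorial * p.2.factorial) * a ^ p.1 * b ^ p.2 =
      c / n.factorial * (a + b) ^ n := by
  rw [(Commute.all a b).add_pow', Finset.mul_sum]
  refine Finset.sum_congr rfl fun p hp => ?_
  rw [← Finset.HasAntidiagonal.mem_antidiagonal.1 hp, nsmul_eq_mul, Nat.cast_add_choose]
  field_simp

/-- The bivariate binomial coefficients of `(1 - x - y) ^ (-s)`. -/
noncomputable def binomCoeff (s : ℝ) (p : ℕ × ℕ) : ℝ :=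
  (ascPochhammer ℝ (p.1 + p.2)).eval s / (p.1.factorial * p.2.factorial)

lemma binomCoeff_nonneg {s : ℝ} (hs : 0 < s) (p : ℕ × ℕ) : 0 ≤ binomCoeff s p := by
  have := ascPochhammer_pos (p.1 + p.2) s hs
  unfold binomCoeff
  positivity

lemma summable_binomCoeff {s a b : ℝ} (hs : 0 < s) (ha : 0 ≤ a) (hb : 0 ≤ b) (hab : a + b < 1) :
    Summable fun p : ℕ × ℕ => binomCoeff s p * a ^ p.1 * b ^ p.2 := by
  rw [← Finset.HasAntidiagonal.sigmaAntidiagonalEquivProd.summable_iff, summable_sigma_of_nonneg]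
  · refine ⟨fun n => Summable.of_finite, ?_⟩
    refine (hasSum_one_sub_rpow_neg s (x := a + b)
      (by rwa [abs_of_nonneg (by positivity)])).summable.congr fun n => ?_
    rw [← sum_antidiagonal_binomial, tsum_fintype, ← Finset.sum_coe_sort]
    refine Finset.sum_congr rfl fun p _ => ?_
    have := Finset.HasAntidiagonal.mem_antidiagonal.1 p.2
    simp [binomCoeff, this]
  · intro p
    have := binomCoeff_nonneg hs (p.2 : ℕ × ℕ)
    simp only [Function.comp_apply, Finset.HasAntidiagonal.sigmaAntidiagonalEquivProd_apply]
    positivity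

lemma hasSum_binomCoeff {s a b : ℝ} (hs : 0 < s) (hab : |a| + |b| < 1) :
    HasSum (fun p : ℕ × ℕ => binomCoeff s p * a ^ p.1 * b ^ p.2) ((1 - a - b) ^ (-s)) := by
  have hsum : Summable fun p : ℕ × ℕ => binomCoeff s p * a ^ p.1 * b ^ p.2 := by
    refine .of_norm ((summable_binomCoeff hs (abs_nonneg a) (abs_nonneg b) hab).congr fun p => ?_)
    simp [abs_of_nonneg (binomCoeff_nonneg hs p)]
  rw [← Finset.HasAntidiagonal.sigmaAntidiagonalEquivProd.hasSum_iff]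
  rw [sub_sub]
  refine (hasSum_one_sub_rpow_neg s (x := a + b) ((abs_add_le a b).trans_lt hab)).sigma_of_hasSum
    (fun n => ?_) (Finset.HasAntidiagonal.sigmaAntidiagonalEquivProd.summable_iff.2 hsum)
  rw [← sum_antidiagonal_binomial, ← Finset.sum_coe_sort]
  convert! hasSum_fintype _ using 1
  refine Finset.sum_congr rfl fun p _ => ?_
  have := Finset.HasAntidiagonal.mem_antidiagonal.1 p.2
  simp [binomCoeff, this]

end Pochhammer

section Moments

lemma integral_betaPDFReal {a b : ℝ} (ha : 0 < a) (hb : 0 < b) :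
    ∫ x in Ioi (0 : ℝ), ProbabilityTheory.betaPDFReal a b x = 1 := by
  have hnonneg : 0 ≤ ProbabilityTheory.betaPDFReal a b := fun x => by
    by_cases h : 0 < x ∧ x < 1
    · exact (ProbabilityTheory.betaPDFReal_pos h.1 h.2 ha hb).le
    · simp [ProbabilityTheory.betaPDFReal, h]
  rw [setIntegral_eq_integral_of_forall_compl_eq_zero fun x hx => ?_,
    integral_eq_lintegral_of_nonneg_ae (.of_forall hnonneg) (by fun_prop)]
  · exact (ENNReal.toReal_eq_one_iff _).2 (ProbabilityTheory.lintegral_betaPDF_eq_one ha hb)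
  · rw [ProbabilityTheory.betaPDFReal, if_neg fun h => hx h.1]

lemma integral_pow_mul_one_sub_sq_rpow {ν : ℝ} (hν : -(1 / 2) < ν) (k : ℕ) :
    ∫ u in Ioo (-1 : ℝ) 1, u ^ (2 * k) * (1 - u ^ 2) ^ (ν - 1 / 2) =
      ProbabilityTheory.beta (k + 1 / 2) (ν + 1 / 2) := by
  set B := ProbabilityTheory.beta (k + 1 / 2) (ν + 1 / 2) with hB
  have hBpos : 0 < B := ProbabilityTheory.beta_pos (by positivity) (by linarith)
  let F : ℝ → ℝ := fun x => if x < 1 then x ^ (2 * k) * (1 - x ^ 2) ^ (ν - 1 / 2) else 0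
  have h1 : ∫ u in Ioo (-1 : ℝ) 1, u ^ (2 * k) * (1 - u ^ 2) ^ (ν - 1 / 2) = ∫ x, F |x| := by
    rw [← integral_indicator measurableSet_Ioo]
    congr 1 with x
    by_cases hx : |x| < 1
    · rw [indicator_of_mem (by rwa [mem_Ioo, ← abs_lt])]
      simp only [F, if_pos hx, sq_abs]
      rw [pow_mul, pow_mul, sq_abs]
    · rw [indicator_of_notMem (by rwa [mem_Ioo, ← abs_lt])]
      simp only [F, if_neg hx]
  have h2 : ∫ x in Ioi (0 : ℝ), F x = B / 2 := by
    have h := integral_comp_rpow_Ioi_of_pos (E := ℝ)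
      (g := ProbabilityTheory.betaPDFReal (k + 1 / 2) (ν + 1 / 2)) (p := 2) (by norm_num)
    rw [integral_betaPDFReal (by positivity) (by linarith)] at h
    have h3 : ∫ x in Ioi (0 : ℝ), F x = ∫ x in Ioi (0 : ℝ), B / 2 * ((2 * x ^ ((2 : ℝ) - 1)) •
        ProbabilityTheory.betaPDFReal (k + 1 / 2) (ν + 1 / 2) (x ^ (2 : ℝ))) := by
      refine setIntegral_congr_fun measurableSet_Ioi fun x hx => ?_
      have hx : 0 < x := hx
      have hx1 : x ^ (2 : ℝ) < 1 ↔ x < 1 := by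
        rw [Real.rpow_two, sq_lt_one_iff₀ hx.le]
      simp only [F, ProbabilityTheory.betaPDFReal, hx1]
      by_cases hx2 : x < 1
      · have e : x * (x ^ (2 : ℝ)) ^ ((k : ℝ) + 1 / 2 - 1) = x ^ (2 * k) := by
          rw [← Real.rpow_mul hx.le]
          nth_rw 1 [← Real.rpow_one x]
          rw [← Real.rpow_add hx, ← Real.rpow_natCast]
          congr 1
          push_cast
          ring
        rw [if_pos hx2, if_pos ⟨by positivity, hx2⟩, ← e, ← hB]
        rw [show ν + 1 / 2 - 1 = ν - 1 / 2 by ring, Real.rpow_two,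
          show (2 : ℝ) - 1 = 1 by norm_num, Real.rpow_one, smul_eq_mul]
        field_simp
      · rw [if_neg hx2, if_neg (by tauto)]
        simp
    rw [h3, integral_const_mul, h, mul_one]
  rw [h1, integral_comp_abs, h2]
  ring

lemma integrableOn_one_sub_sq_rpow {ν : ℝ} (hν : -(1 / 2) < ν) :
    IntegrableOn (fun u : ℝ => (1 - u ^ 2) ^ (ν - 1 / 2)) (Ioo (-1) 1) := by
  by_contra h
  have h1 := integral_pow_mul_one_sub_sq_rpow hν 0
  simp only [mul_zero, pow_zero, one_mul] at h1
  rw [integral_undef h] at h1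
  exact (ProbabilityTheory.beta_pos (by positivity) (by linarith)).ne h1

/-- The normalizing constant of the ultraspherical weight. -/
noncomputable def piConst (ν : ℝ) : ℝ :=
  Real.Gamma (ν + 1) / (Real.sqrt π * Real.Gamma (ν + 1 / 2))

lemma piConst_mul_beta {ν : ℝ} (hν : -(1 / 2) < ν) (k : ℕ) :
    piConst ν * ProbabilityTheory.beta (k + 1 / 2) (ν + 1 / 2) =
      (ascPochhammer ℝ k).eval (1 / 2) / (ascPochhammer ℝ k).eval (ν + 1) := by
  have hν' : 0 < ν + 1 / 2 := by linarith
  induction k with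
  | zero =>
    have h1 := (Real.Gamma_pos_of_pos hν').ne'
    have h2 := (Real.Gamma_pos_of_pos (by linarith : 0 < ν + 1)).ne'
    have h3 : √π ≠ 0 := by positivity
    rw [ProbabilityTheory.beta, piConst, show ((0 : ℕ) : ℝ) + 1 / 2 + (ν + 1 / 2) = ν + 1 by
      push_cast; ring, Nat.cast_zero, zero_add, Real.Gamma_one_half_eq]
    simp only [ascPochhammer_zero, Polynomial.eval_one, div_one]
    generalize Real.Gamma (ν + 1 / 2) = g at h1 ⊢
    field_simp
  | succ k ih =>
    have hk : 0 < ν + 1 + k := by linarith [k.cast_nonneg (α := ℝ)]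
    have e : ProbabilityTheory.beta ((k + 1 : ℕ) + 1 / 2) (ν + 1 / 2) =
        (k + 1 / 2) / (ν + 1 + k) * ProbabilityTheory.beta (k + 1 / 2) (ν + 1 / 2) := by
      rw [ProbabilityTheory.beta, ProbabilityTheory.beta,
        show ((k + 1 : ℕ) : ℝ) + 1 / 2 = (k + 1 / 2) + 1 by push_cast; ring,
        show (k : ℝ) + 1 / 2 + 1 + (ν + 1 / 2) = (ν + 1 + k) + 1 by ring,
        show (k : ℝ) + 1 / 2 + (ν + 1 / 2) = (ν + 1 + k) by ring,
        Real.Gamma_add_one (by positivity), Real.Gamma_add_one hk.ne']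
      have : (Real.Gamma (ν + 1 + k)) ≠ 0 := (Real.Gamma_pos_of_pos hk).ne'
      field_simp
    rw [e, ascPochhammer_succ_eval, ascPochhammer_succ_eval, mul_left_comm, ih,
      div_mul_div_comm]
    ring_nf

end Moments
section UltrasphericalPrimitive

lemma integrableOn_pow_mul_one_sub_sq_rpow {ν : ℝ} (hν : -(1 / 2) < ν) (n : ℕ) :
    IntegrableOn (fun u : ℝ => u ^ n * (1 - u ^ 2) ^ (ν - 1 / 2)) (Ioo (-1) 1) := by
  refine (integrableOn_one_sub_sq_rpow hν).bdd_mul (c := 1) (by fun_prop) ?_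
  refine ae_restrict_of_forall_mem measurableSet_Ioo fun u hu => ?_
  rw [norm_pow]
  exact pow_le_one₀ (norm_nonneg u) (abs_le.2 ⟨hu.1.le, hu.2.le⟩)

lemma intervalIntegrable_one_sub_sq_rpow {ν : ℝ} (hν : -(1 / 2) < ν) :
    IntervalIntegrable (fun u : ℝ => (1 - u ^ 2) ^ (ν - 1 / 2)) volume (-1) 1 := by
  rw [intervalIntegrable_iff_integrableOn_Ioo_of_le (by norm_num)]
  exact integrableOn_one_sub_sq_rpow hν

lemma PiFun_neg (ν u : ℝ) : PiFun ν (-u) = -PiFun ν u := by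
  have h := intervalIntegral.integral_comp_neg (a := 0) (b := u)
    (f := fun w : ℝ => (1 - w ^ 2) ^ (ν - 1 / 2))
  simp only [neg_sq, neg_zero] at h
  rw [PiFun, PiFun, h, intervalIntegral.integral_symm]
  ring

lemma continuousOn_PiFun {ν : ℝ} (hν : -(1 / 2) < ν) : ContinuousOn (PiFun ν) (Icc (-1) 1) := by
  rw [← uIcc_of_le (by norm_num : (-1 : ℝ) ≤ 1)]
  exact continuousOn_const.mul (intervalIntegral.continuousOn_primitive_interval'
    (intervalIntegrable_one_sub_sq_rpow hν) (by simp))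

lemma PiFun_one_sub_PiFun_neg_one {ν : ℝ} (hν : -(1 / 2) < ν) :
    PiFun ν 1 - PiFun ν (-1) = 1 := by
  have hint := intervalIntegrable_one_sub_sq_rpow hν
  have h := piConst_mul_beta hν 0
  rw [← integral_pow_mul_one_sub_sq_rpow hν, ← integral_Ioc_eq_integral_Ioo,
    ← intervalIntegral.integral_of_le (by norm_num)] at h
  simp only [mul_zero, pow_zero, one_mul, ascPochhammer_zero, Polynomial.eval_one, div_one] at h
  have h2 := intervalIntegral.integral_interval_sub_left (a := 0) (b := 1) (c := -1)
    (f := fun u : ℝ => (1 - u ^ 2) ^ (ν - 1 / 2)) (μ := volume)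
    (hint.mono_set (uIcc_subset_uIcc (by simp) (by simp)))
    (hint.mono_set (uIcc_subset_uIcc (by simp) (by simp)))
  rw [← h2, mul_sub] at h
  exact h

lemma one_sub_sq_pos {u : ℝ} (hu : u ∈ Ioo (-1 : ℝ) 1) : 0 < 1 - u ^ 2 := by
  nlinarith [hu.1, hu.2]

lemma uIcc_zero_subset_Ioo {u : ℝ} (hu : u ∈ Ioo (-1 : ℝ) 1) : uIcc 0 u ⊆ Ioo (-1) 1 :=
  OrdConnected.uIcc_subset inferInstance (by simp) hu

lemma continuousOn_one_sub_sq_rpow (γ : ℝ) :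
    ContinuousOn (fun u : ℝ => (1 - u ^ 2) ^ γ) (Ioo (-1) 1) :=
  ContinuousOn.rpow_const (by fun_prop) fun _ hu => Or.inl (one_sub_sq_pos hu).ne'

lemma hasDerivAt_PiFun (ν : ℝ) {u : ℝ} (hu : u ∈ Ioo (-1 : ℝ) 1) :
    HasDerivAt (PiFun ν) (piConst ν * (1 - u ^ 2) ^ (ν - 1 / 2)) u := by
  have hc := continuousOn_one_sub_sq_rpow (ν - 1 / 2)
  refine HasDerivAt.const_mul _ (intervalIntegral.integral_hasDerivAt_right ?_ ?_ ?_)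
  · exact (hc.mono (uIcc_zero_subset_Ioo hu)).intervalIntegrable
  · exact hc.stronglyMeasurableAtFilter isOpen_Ioo u hu
  · exact hc.continuousAt (isOpen_Ioo.mem_nhds hu)

lemma integral_odd_pow_mul_PiFun {ν : ℝ} (hν : -(1 / 2) < ν) (k : ℕ) :
    (2 * k + 2) * ∫ u in Ioo (-1 : ℝ) 1, u ^ (2 * k + 1) * PiFun ν u =
      1 - (ascPochhammer ℝ (k + 1)).eval (1 / 2) / (ascPochhammer ℝ (k + 1)).eval (ν + 1) := by
  have h := intervalIntegral.integral_mul_deriv_eq_deriv_mul_of_hasDerivAt (a := -1) (b := 1)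
    (u := PiFun ν) (v := fun u => u ^ (2 * k + 2))
    (u' := fun u => piConst ν * (1 - u ^ 2) ^ (ν - 1 / 2))
    (v' := fun u => (2 * k + 2) * u ^ (2 * k + 1))
    (by rw [uIcc_of_le (by norm_num)]; exact continuousOn_PiFun hν) (by fun_prop)
    (fun u hu => hasDerivAt_PiFun ν (by simpa using hu))
    (fun u _ => by simpa using hasDerivAt_pow (2 * k + 2) u)
    ((intervalIntegrable_one_sub_sq_rpow hν).const_mul _)
    (Continuous.intervalIntegrable (by fun_prop) _ _)
  have e1 : ∀ u : ℝ, PiFun ν u * ((2 * k + 2) * u ^ (2 * k + 1)) =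
      (2 * k + 2) * (u ^ (2 * k + 1) * PiFun ν u) := fun u => by ring
  have e2 : ∀ u : ℝ, piConst ν * (1 - u ^ 2) ^ (ν - 1 / 2) * u ^ (2 * k + 2) =
      piConst ν * (u ^ (2 * (k + 1)) * (1 - u ^ 2) ^ (ν - 1 / 2)) := fun u => by ring
  simp only [e1, e2, intervalIntegral.integral_const_mul] at h
  rw [intervalIntegral.integral_of_le (by norm_num), intervalIntegral.integral_of_le (by norm_num),
    integral_Ioc_eq_integral_Ioo, integral_Ioc_eq_integral_Ioo,
    integral_pow_mul_one_sub_sq_rpow hν, piConst_mul_beta hν] at h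
  rw [h, one_pow, Even.neg_one_pow (by simp [parity_simps]), mul_one, mul_one,
    PiFun_one_sub_PiFun_neg_one hν]

lemma piConst_add_one {α : ℝ} (hα₁ : -1 < α) (hα₂ : α < -(1 / 2)) :
    piConst (α + 1) = (2 * α + 2) / (2 * α + 1) * piConst α := by
  have h1 : α + 1 / 2 ≠ 0 := by linarith
  have h2 : 2 * α + 1 ≠ 0 := by linarith
  have h3 : Real.Gamma (α + 1 / 2) ≠ 0 := Real.Gamma_ne_zero fun m hm => by
    rcases m with _ | m
    · exact h1 (by simpa using hm)
    · push_cast at hm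
      linarith [m.cast_nonneg (α := ℝ)]
  rw [piConst, piConst, Real.Gamma_add_one (s := α + 1) (by linarith),
    show α + 1 + 1 / 2 = α + 1 / 2 + 1 by ring, Real.Gamma_add_one h1]
  field_simp

lemma PiFun_eq_PiFun_add_one_sub {α : ℝ} (hα₁ : -1 < α) (hα₂ : α < -(1 / 2)) {u : ℝ}
    (hu : u ∈ Ioo (-1 : ℝ) 1) :
    PiFun α u = PiFun (α + 1) u -
      piConst (α + 1) / (2 * α + 2) * (u * (1 - u ^ 2) ^ (α + 1 - 1 / 2)) := by
  have h0 : 2 * α + 1 ≠ 0 := by linarith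
  have h0' : 2 * α + 2 ≠ 0 := by linarith
  have hc (γ : ℝ) : IntervalIntegrable (fun w : ℝ => (1 - w ^ 2) ^ γ) volume 0 u :=
    ((continuousOn_one_sub_sq_rpow γ).mono (uIcc_zero_subset_Ioo hu)).intervalIntegrable
  have h := intervalIntegral.integral_eq_sub_of_hasDerivAt (a := 0) (b := u)
    (f := fun w => w * (1 - w ^ 2) ^ (α + 1 - 1 / 2))
    (f' := fun w => (2 * α + 2) * (1 - w ^ 2) ^ (α + 1 - 1 / 2) -
      (2 * α + 1) * (1 - w ^ 2) ^ (α - 1 / 2)) ?_ (((hc _).const_mul _).sub ((hc _).const_mul _))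
  · rw [intervalIntegral.integral_sub ((hc _).const_mul _) ((hc _).const_mul _),
      intervalIntegral.integral_const_mul, intervalIntegral.integral_const_mul] at h
    have hP : ∀ γ, PiFun γ u = piConst γ * ∫ w in (0 : ℝ)..u, (1 - w ^ 2) ^ (γ - 1 / 2) :=
      fun _ => rfl
    rw [hP, hP, piConst_add_one hα₁ hα₂]
    rw [zero_mul, sub_zero] at h
    rw [← h]
    have h1 : α + 1 ≠ 0 := by linarith
    generalize (∫ w in (0 : ℝ)..u, (1 - w ^ 2) ^ (α + 1 - 1 / 2)) = A
    generalize (∫ w in (0 : ℝ)..u, (1 - w ^ 2) ^ (α - 1 / 2)) = B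
    field_simp
    ring
  · intro w hw
    have hpos := one_sub_sq_pos (uIcc_zero_subset_Ioo hu hw)
    have hd : HasDerivAt (fun w : ℝ => 1 - w ^ 2) (-(2 * w)) w := by
      simpa using (hasDerivAt_pow 2 w).const_sub 1
    convert! (hasDerivAt_id w).mul (hd.rpow_const (p := α + 1 - 1 / 2) (Or.inl hpos.ne')) using 1
    rw [show α + 1 - 1 / 2 - 1 = α - 1 / 2 by ring, show α + 1 - 1 / 2 = α - 1 / 2 + 1 by ring,
      Real.rpow_add_one hpos.ne', id]
    ring

lemma integrableOn_PiFun {α : ℝ} (hα₁ : -1 < α) (hα₂ : α < -(1 / 2)) :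
    IntegrableOn (PiFun α) (Ioo (-1) 1) := by
  have h1 : IntegrableOn (PiFun (α + 1)) (Ioo (-1) 1) :=
    (continuousOn_PiFun (by linarith)).integrableOn_Icc.mono_set Ioo_subset_Icc_self
  have h2 := integrableOn_pow_mul_one_sub_sq_rpow (ν := α + 1) (by linarith) 1
  simp only [pow_one] at h2
  exact (h1.sub (h2.const_mul (piConst (α + 1) / (2 * α + 2)))).congr_fun
    (fun u hu => (PiFun_eq_PiFun_add_one_sub hα₁ hα₂ hu).symm) measurableSet_Ioo

lemma integral_pow_mul_PiFun_of_even (ν : ℝ) {n : ℕ} (hn : Even n) :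
    ∫ u in Ioo (-1 : ℝ) 1, u ^ n * PiFun ν u = 0 := by
  have h := intervalIntegral.integral_comp_neg (a := -1) (b := 1) (f := fun u => u ^ n * PiFun ν u)
  simp only [hn.neg_pow, PiFun_neg, mul_neg, intervalIntegral.integral_neg, neg_neg] at h
  rw [← integral_Ioc_eq_integral_Ioo, ← intervalIntegral.integral_of_le (by norm_num)]
  linarith

/-- The moments of the signed functional `f ↦ ∫ (-f') Π_α + (f(-1) + f(1)) / 2`. -/
noncomputable def regularizedMoment (α : ℝ) (n : ℕ) : ℝ :=
  (1 + (-1) ^ n) / 2 - n * ∫ u in Ioo (-1 : ℝ) 1, u ^ (n - 1) * PiFun α u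

lemma regularizedMoment_of_odd (α : ℝ) {n : ℕ} (hn : Odd n) : regularizedMoment α n = 0 := by
  rw [regularizedMoment, integral_pow_mul_PiFun_of_even α (Nat.Odd.sub_odd hn odd_one),
    hn.neg_one_pow]
  ring

lemma regularizedMoment_two_mul {α : ℝ} (hα₁ : -1 < α) (hα₂ : α < -(1 / 2)) (k : ℕ) :
    regularizedMoment α (2 * k) =
      (ascPochhammer ℝ k).eval (1 / 2) / (ascPochhammer ℝ k).eval (α + 1) := by
  rcases k with _ | k
  · simp [regularizedMoment]
  have hν : -(1 / 2) < α + 1 := by linarith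
  have hc : 2 * α + 2 ≠ 0 := by linarith
  set c := piConst (α + 1) / (2 * α + 2) with hcdef
  have e : ∫ u in Ioo (-1 : ℝ) 1, u ^ (2 * k + 1) * PiFun α u =
      (∫ u in Ioo (-1 : ℝ) 1, u ^ (2 * k + 1) * PiFun (α + 1) u) -
        c * ∫ u in Ioo (-1 : ℝ) 1, u ^ (2 * (k + 1)) * (1 - u ^ 2) ^ (α + 1 - 1 / 2) := by
    rw [← integral_const_mul, ← integral_sub]
    · refine setIntegral_congr_fun measurableSet_Ioo fun u hu => ?_
      simp only [PiFun_eq_PiFun_add_one_sub hα₁ hα₂ hu]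
      ring
    · exact ContinuousOn.integrableOn_Icc ((by fun_prop : ContinuousOn (fun u : ℝ =>
        u ^ (2 * k + 1)) _).mul (continuousOn_PiFun hν)) |>.mono_set Ioo_subset_Icc_self
    · exact (integrableOn_pow_mul_one_sub_sq_rpow hν _).const_mul c
  have h1 := integral_odd_pow_mul_PiFun hν k
  have h2 := piConst_mul_beta hν (k + 1)
  rw [← integral_pow_mul_one_sub_sq_rpow hν] at h2
  rw [regularizedMoment, Even.neg_one_pow (by simp), show 2 * (k + 1) - 1 = 2 * k + 1 by omega, e]
  have hp : (ascPochhammer ℝ k).eval (α + 2) ≠ 0 := (ascPochhammer_pos k _ (by linarith)).ne'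
  have hasc : (ascPochhammer ℝ (k + 1)).eval (α + 1) = (α + 1) *
      (ascPochhammer ℝ k).eval (α + 2) := by
    rw [ascPochhammer_eval_succ_left]
    ring_nf
  have hasc' : (ascPochhammer ℝ (k + 1)).eval (α + 1 + 1) =
      (ascPochhammer ℝ k).eval (α + 2) * (α + 2 + k) := by
    rw [ascPochhammer_succ_eval]
    ring_nf
  rw [hasc'] at h1 h2
  rw [hasc, hcdef, div_mul_eq_mul_div, h2]
  push_cast
  have e3 : ∀ x y : ℝ, (1 + 1) / 2 - 2 * ((k : ℝ) + 1) * (x - y) =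
    1 - (2 * k + 2) * x + (2 * k + 2) * y := fun x y => by ring
  rw [e3, h1]
  have h5 : α + 1 ≠ 0 := by linarith
  have h6 : α + 2 + k ≠ 0 := by linarith [k.cast_nonneg (α := ℝ)]
  field_simp
  ring

end UltrasphericalPrimitive
section UltrasphericalMeasure

lemma integral_PiMeas_neg_half (f : ℝ → ℝ) :
    ∫ u, f u ∂PiMeas (-(1 / 2)) = (f (-1) + f 1) / 2 := by
  rw [PiMeas, if_pos rfl, integral_smul_measure, integral_add_measure]
  · simp
    ring
  · exact integrable_dirac (by simp)
  · exact integrable_dirac (by simp)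

lemma integral_PiMeas_of_gt {ν : ℝ} (hν : -(1 / 2) < ν) (f : ℝ → ℝ) :
    ∫ u, f u ∂PiMeas ν =
      piConst ν * ∫ u in Ioo (-1 : ℝ) 1, f u * (1 - u ^ 2) ^ (ν - 1 / 2) := by
  rw [PiMeas, if_neg hν.ne', integral_withDensity_eq_integral_toReal_smul (by fun_prop)
    (.of_forall fun _ => ENNReal.ofReal_lt_top), integral_Icc_eq_integral_Ioo,
    ← integral_const_mul]
  refine setIntegral_congr_fun measurableSet_Ioo fun u hu => ?_
  have h1 := Real.Gamma_pos_of_pos (by linarith : 0 < ν + 1)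
  have h2 := Real.Gamma_pos_of_pos (by linarith : 0 < ν + 1 / 2)
  have h3 := one_sub_sq_pos hu
  rw [ENNReal.toReal_ofReal (by positivity), piConst, smul_eq_mul]
  ring

lemma isFiniteMeasure_PiMeas {ν : ℝ} (hν : -(1 / 2) ≤ ν) : IsFiniteMeasure (PiMeas ν) := by
  unfold PiMeas
  split_ifs with h
  · exact Measure.smul_finite _ (by simp)
  · have hν' : -(1 / 2) < ν := lt_of_le_of_ne hν (Ne.symm h)
    refine isFiniteMeasure_withDensity_ofReal (Integrable.hasFiniteIntegral ?_)
    refine Integrable.const_mul ?_ _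
    exact (integrableOn_Icc_iff_integrableOn_Ioo).2 (integrableOn_one_sub_sq_rpow hν')

lemma ae_PiMeas_abs_le_one (ν : ℝ) : ∀ᵐ u ∂PiMeas ν, |u| ≤ 1 := by
  unfold PiMeas
  split_ifs
  · refine Measure.ae_smul_measure ?_ _
    rw [ae_add_measure_iff]
    simp [ae_dirac_eq]
  · refine (withDensity_absolutelyContinuous _ _).ae_le ?_
    exact ae_restrict_of_forall_mem measurableSet_Icc fun u hu => abs_le.2 hu

lemma integral_pow_PiMeas_of_odd {ν : ℝ} (hν : -(1 / 2) ≤ ν) {n : ℕ} (hn : Odd n) :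
    ∫ u, u ^ n ∂PiMeas ν = 0 := by
  rcases hν.eq_or_lt with rfl | hν
  · rw [integral_PiMeas_neg_half, hn.neg_one_pow]
    simp
  · have h := intervalIntegral.integral_comp_neg (a := -1) (b := 1)
      (f := fun u : ℝ => u ^ n * (1 - u ^ 2) ^ (ν - 1 / 2))
    simp only [hn.neg_pow, neg_sq, neg_mul, intervalIntegral.integral_neg, neg_neg] at h
    rw [integral_PiMeas_of_gt hν, ← integral_Ioc_eq_integral_Ioo,
      ← intervalIntegral.integral_of_le (by norm_num), mul_eq_zero]
    right
    linarith

lemma integral_pow_two_mul_PiMeas {ν : ℝ} (hν : -(1 / 2) ≤ ν) (k : ℕ) :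
    ∫ u, u ^ (2 * k) ∂PiMeas ν =
      (ascPochhammer ℝ k).eval (1 / 2) / (ascPochhammer ℝ k).eval (ν + 1) := by
  rcases hν.eq_or_lt with rfl | hν
  · have := (ascPochhammer_pos k (1 / 2 : ℝ) (by norm_num)).ne'
    rw [integral_PiMeas_neg_half, show -(1 / 2 : ℝ) + 1 = 1 / 2 by norm_num, div_self this]
    simp
  · rw [integral_PiMeas_of_gt hν, integral_pow_mul_one_sub_sq_rpow hν, piConst_mul_beta hν]

end UltrasphericalMeasure

section DoubleSeries

lemma abs_mul_add_abs_mul_lt_one {z w u v : ℝ} (hz : 0 ≤ z) (hw : 0 ≤ w) (hzw : z + w < 1)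
    (hu : |u| ≤ 1) (hv : |v| ≤ 1) : |u * z| + |v * w| < 1 := by
  rw [abs_mul, abs_mul, abs_of_nonneg hz, abs_of_nonneg hw]
  nlinarith

lemma one_sub_mul_sub_mul_pos {z w u v : ℝ} (hz : 0 ≤ z) (hw : 0 ≤ w) (hzw : z + w < 1)
    (hu : |u| ≤ 1) (hv : |v| ≤ 1) : 0 < 1 - u * z - v * w := by
  linarith [abs_mul_add_abs_mul_lt_one hz hw hzw hu hv, le_abs_self (u * z), le_abs_self (v * w)]

lemma hasSum_integral_one_sub_rpow_mul {s z w v : ℝ} (hs : 0 < s) (hz : 0 ≤ z) (hw : 0 ≤ w)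
    (hzw : z + w < 1) (hv : |v| ≤ 1) {μ : Measure ℝ} (hμ : ∀ᵐ u ∂μ, |u| ≤ 1)
    {h : ℝ → ℝ} (hh : Integrable h μ) :
    HasSum (fun p : ℕ × ℕ =>
        binomCoeff s p * z ^ p.1 * w ^ p.2 * (∫ u, u ^ p.1 * h u ∂μ) * v ^ p.2)
      (∫ u, (1 - u * z - v * w) ^ (-s) * h u ∂μ) := by
  have hsum := summable_binomCoeff hs hz hw hzw
  have key := hasSum_integral_of_dominated_convergence (μ := μ)
    (F := fun (p : ℕ × ℕ) u => binomCoeff s p * (u * z) ^ p.1 * (v * w) ^ p.2 * h u)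
    (f := fun u => (1 - u * z - v * w) ^ (-s) * h u)
    (fun p u => binomCoeff s p * z ^ p.1 * w ^ p.2 * |h u|)
    (fun p => (Continuous.aestronglyMeasurable (by fun_prop)).mul hh.1) ?_
    (.of_forall fun u => hsum.mul_right _) ?_ ?_
  · refine key.congr_fun fun p => ?_
    rw [mul_right_comm, ← integral_const_mul]
    congr 1 with u
    ring
  · intro p
    filter_upwards [hμ] with u hu
    have := binomCoeff_nonneg hs p
    rw [norm_mul, norm_mul, norm_mul, norm_pow, norm_pow, norm_mul, norm_mul]
    simp only [Real.norm_eq_abs, abs_of_nonneg this, abs_of_nonneg hz, abs_of_nonneg hw]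
    gcongr
    · exact mul_le_of_le_one_left hz hu
    · exact mul_le_of_le_one_left hw hv
  · simp only [tsum_mul_right]
    exact hh.abs.const_mul _
  · filter_upwards [hμ] with u hu
    exact (hasSum_binomCoeff hs (abs_mul_add_abs_mul_lt_one hz hw hzw hu hv)).mul_right _

lemma hasSum_integral_integral_one_sub_rpow_mul {s z w : ℝ} (hs : 0 < s) (hz : 0 ≤ z) (hw : 0 ≤ w)
    (hzw : z + w < 1) {μ ν : Measure ℝ} [IsFiniteMeasure ν] (hμ : ∀ᵐ u ∂μ, |u| ≤ 1)
    (hν : ∀ᵐ v ∂ν, |v| ≤ 1) {h : ℝ → ℝ} (hh : Integrable h μ) :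
    HasSum (fun p : ℕ × ℕ =>
        binomCoeff s p * z ^ p.1 * w ^ p.2 * (∫ u, u ^ p.1 * h u ∂μ) * ∫ v, v ^ p.2 ∂ν)
      (∫ v, ∫ u, (1 - u * z - v * w) ^ (-s) * h u ∂μ ∂ν) := by
  have hsum := summable_binomCoeff hs hz hw hzw
  have key := hasSum_integral_of_dominated_convergence (μ := ν)
    (F := fun (p : ℕ × ℕ) v =>
      binomCoeff s p * z ^ p.1 * w ^ p.2 * (∫ u, u ^ p.1 * h u ∂μ) * v ^ p.2)
    (f := fun v => ∫ u, (1 - u * z - v * w) ^ (-s) * h u ∂μ)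
    (fun p _ => binomCoeff s p * z ^ p.1 * w ^ p.2 * ∫ u, |h u| ∂μ)
    (fun p => Continuous.aestronglyMeasurable (by fun_prop)) ?_
    (.of_forall fun u => hsum.mul_right _) (integrable_const _) ?_
  · simpa only [integral_const_mul] using key
  · intro p
    filter_upwards [hν] with v hv
    have hc : 0 ≤ binomCoeff s p * z ^ p.1 * w ^ p.2 := by
      have := binomCoeff_nonneg hs p
      positivity
    have hI : ‖∫ u, u ^ p.1 * h u ∂μ‖ ≤ ∫ u, |h u| ∂μ := by
      refine norm_integral_le_of_norm_le hh.abs ?_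
      filter_upwards [hμ] with u hu
      rw [norm_mul, norm_pow]
      exact mul_le_of_le_one_left (norm_nonneg _) (pow_le_one₀ (norm_nonneg u) hu)
    rw [norm_mul, norm_mul, norm_pow, Real.norm_of_nonneg hc]
    calc _ ≤ binomCoeff s p * z ^ p.1 * w ^ p.2 * ‖∫ u, u ^ p.1 * h u ∂μ‖ :=
          mul_le_of_le_one_right (by positivity) (pow_le_one₀ (norm_nonneg v) hv)
      _ ≤ _ := by gcongr
  · filter_upwards [hν] with v hv
    exact hasSum_integral_one_sub_rpow_mul hs hz hw hzw hv hμ hh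

lemma binomCoeff_succ_mul (s : ℝ) (i j : ℕ) :
    binomCoeff s (i + 1, j) * (i + 1) = s * binomCoeff (s + 1) (i, j) := by
  simp only [binomCoeff]
  rw [show i + 1 + j = i + j + 1 by ring, ascPochhammer_eval_succ_left, Nat.factorial_succ]
  push_cast
  field_simp

lemma hasSum_regularizedMoment {α β s z w : ℝ} (hα₁ : -1 < α) (hα₂ : α < -(1 / 2))
    (hβ : -(1 / 2) ≤ β) (hs : 0 < s) (hz : 0 ≤ z) (hw : 0 ≤ w) (hzw : z + w < 1) :
    HasSum (fun p : ℕ × ℕ =>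
        binomCoeff s p * z ^ p.1 * w ^ p.2 * regularizedMoment α p.1 * ∫ v, v ^ p.2 ∂PiMeas β)
      ((∫ v, (∫ u in Ioo (-1 : ℝ) 1,
          -(s * z * (1 - u * z - v * w) ^ (-(s + 1))) * PiFun α u) ∂PiMeas β) +
        ∫ v, ∫ u, (1 - u * z - v * w) ^ (-s) ∂PiMeas (-(1 / 2)) ∂PiMeas β) := by
  have := isFiniteMeasure_PiMeas hβ
  have := isFiniteMeasure_PiMeas (le_refl (-(1 / 2)))
  have hA := (hasSum_integral_integral_one_sub_rpow_mul (s := s + 1) (by linarith) hz hw hzw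
    (ae_restrict_of_forall_mem measurableSet_Ioo fun u hu => abs_le.2 ⟨hu.1.le, hu.2.le⟩)
    (ae_PiMeas_abs_le_one β) (integrableOn_PiFun hα₁ hα₂)).mul_left (-(s * z))
  have hB := hasSum_integral_integral_one_sub_rpow_mul hs hz hw hzw
    (ae_PiMeas_abs_le_one (-(1 / 2))) (ae_PiMeas_abs_le_one β) (integrable_const (1 : ℝ))
  simp only [mul_one, integral_PiMeas_neg_half (fun u => u ^ _)] at hB
  let G : ℕ × ℕ → ℝ := fun p => binomCoeff s p * z ^ p.1 * w ^ p.2 *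
    -(p.1 * ∫ u in Ioo (-1 : ℝ) 1, u ^ (p.1 - 1) * PiFun α u) * ∫ v, v ^ p.2 ∂PiMeas β
  have hinj : Function.Injective (Prod.map Nat.succ id : ℕ × ℕ → ℕ × ℕ) :=
    Nat.succ_injective.prodMap Function.injective_id
  have hG := (hinj.hasSum_iff (f := G) ?_).1 (hA.congr_fun ?_)
  · convert hG.add hB using 2 with p
    · simp only [G, regularizedMoment]
      ring
    · simp only [← neg_mul, mul_assoc, integral_const_mul]
  · rintro ⟨_ | i, j⟩ hp
    · simp [G]
    · exact absurd ⟨(i, j), rfl⟩ hp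
  · rintro ⟨i, j⟩
    simp only [G, Function.comp_apply, Prod.map_apply, id, Nat.succ_eq_add_one, Nat.cast_add_one,
      Nat.add_sub_cancel]
    linear_combination (-(z ^ (i + 1) * w ^ j * (∫ u in Ioo (-1 : ℝ) 1, u ^ i * PiFun α u) *
      ∫ v, v ^ j ∂PiMeas β)) * binomCoeff_succ_mul s i j

lemma F4_eq_of_hasSum {α β s z w S : ℝ} (hα₁ : -1 < α) (hα₂ : α < -(1 / 2))
    (hβ : -(1 / 2) ≤ β) (h : HasSum (fun p : ℕ × ℕ =>
      binomCoeff s p * z ^ p.1 * w ^ p.2 * regularizedMoment α p.1 * ∫ v, v ^ p.2 ∂PiMeas β) S) :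
    F4 (s / 2) ((s + 1) / 2) (α + 1) (β + 1) (z ^ 2) (w ^ 2) = S := by
  have hinj : Function.Injective (Prod.map (2 * ·) (2 * ·) : ℕ × ℕ → ℕ × ℕ) :=
    (mul_right_injective₀ two_ne_zero).prodMap (mul_right_injective₀ two_ne_zero)
  refine (((hinj.hasSum_iff ?_).2 h).congr_fun ?_).tsum_eq
  · rintro ⟨i, j⟩ hp
    rcases Nat.even_or_odd i with hi | hi
    · rcases Nat.even_or_odd j with hj | hj
      · obtain ⟨a, rfl⟩ := hi.two_dvd
        obtain ⟨b, rfl⟩ := hj.two_dvd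
        exact absurd ⟨(a, b), rfl⟩ hp
      · simp [integral_pow_PiMeas_of_odd hβ hj]
    · simp [regularizedMoment_of_odd α hi]
  · rintro ⟨i, j⟩
    have h1 := (ascPochhammer_pos i (1 / 2 : ℝ) (by norm_num)).ne'
    have h2 := (ascPochhammer_pos j (1 / 2 : ℝ) (by norm_num)).ne'
    have h3 := (ascPochhammer_pos i (α + 1) (by linarith)).ne'
    have h4 := (ascPochhammer_pos j (β + 1) (by linarith)).ne'
    simp only [Function.comp_apply, Prod.map_apply]
    rw [regularizedMoment_two_mul hα₁ hα₂, integral_pow_two_mul_PiMeas hβ, binomCoeff]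
    simp only
    rw [← mul_add, ascPochhammer_eval_two_mul, factorial_two_mul_eq_ascPochhammer,
      factorial_two_mul_eq_ascPochhammer, pow_mul, pow_mul, pow_add]
    field_simp

end DoubleSeries

section Kernel

variable {α β t θ φ : ℝ}

lemma Psi_eq {u v z w : ℝ} (hz : z = sin (θ / 2) * sin (φ / 2) / cosh (t / 2))
    (hw : w = cos (θ / 2) * cos (φ / 2) / cosh (t / 2)) (h : 0 < 1 - u * z - v * w) :
    Psi α β t θ φ u v = cab α β * sinh (t / 2) / cosh (t / 2) ^ (α + β + 2) *
      (1 - u * z - v * w) ^ (-(α + β + 2)) := by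
  have hc := cosh_pos (t / 2)
  have e : cosh (t / 2) - 1 + qf θ φ u v = cosh (t / 2) * (1 - u * z - v * w) := by
    rw [qf, hz, hw]
    field_simp
    ring
  rw [Psi, e, mul_rpow hc.le h.le, rpow_neg h.le]
  field_simp

lemma hasDerivAt_one_sub_mul_rpow {s u z a : ℝ} (h : 0 < 1 - u * z - a) :
    HasDerivAt (fun u' => (1 - u' * z - a) ^ (-s))
      (s * z * (1 - u * z - a) ^ (-(s + 1))) u := by
  have hd : HasDerivAt (fun u' => 1 - u' * z - a) (-z) u := by
    simpa using (((hasDerivAt_id u).mul_const z).const_sub 1).sub_const a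
  convert! hd.rpow_const (p := -s) (Or.inl h.ne') using 1
  rw [neg_add']
  ring

end Kernel

theorem jacobi_poisson_representation_low_alpha (α β : ℝ)
    (hα₁ : -1 < α) (hα₂ : α < -(1/2)) (hβ : -(1/2) ≤ β)
    (t : ℝ) (ht : 0 < t) (θ φ : ℝ) (hθ : θ ∈ Icc (0 : ℝ) π) (hφ : φ ∈ Icc (0 : ℝ) π) :
    Hker α β t θ φ =
      (∫ v, (∫ u in Ioo (-1 : ℝ) 1,
          (-(deriv (fun u' => Psi α β t θ φ u' v) u)) * PiFun α u) ∂(PiMeas β))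
      + ∫ v, (∫ u, Psi α β t θ φ u v ∂(PiMeas (-(1/2)))) ∂(PiMeas β) := by
  have hc := cosh_pos (t / 2)
  obtain ⟨z, hz⟩ : ∃ z, z = sin (θ / 2) * sin (φ / 2) / cosh (t / 2) := ⟨_, rfl⟩
  obtain ⟨w, hw⟩ : ∃ w, w = cos (θ / 2) * cos (φ / 2) / cosh (t / 2) := ⟨_, rfl⟩
  have hsin {x : ℝ} (hx : x ∈ Icc 0 π) : 0 ≤ sin (x / 2) :=
    sin_nonneg_of_nonneg_of_le_pi (by linarith [hx.1]) (by linarith [hx.1, hx.2])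
  have hcos {x : ℝ} (hx : x ∈ Icc 0 π) : 0 ≤ cos (x / 2) :=
    cos_nonneg_of_neg_pi_div_two_le_of_le (by linarith [hx.1, hx.2]) (by linarith [hx.2])
  have hz0 : 0 ≤ z := hz ▸ div_nonneg (mul_nonneg (hsin hθ) (hsin hφ)) hc.le
  have hw0 : 0 ≤ w := hw ▸ div_nonneg (mul_nonneg (hcos hθ) (hcos hφ)) hc.le
  have hzw : z + w < 1 := by
    rw [hz, hw, ← add_div, div_lt_one hc]
    have h1 : 1 < cosh (t / 2) := one_lt_cosh.2 (by positivity)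
    have h2 := cos_sub (θ / 2) (φ / 2)
    have h3 := cos_le_one (θ / 2 - φ / 2)
    linarith
  set s := α + β + 2 with hs_def
  have hs : 0 < s := by linarith
  set K := cab α β * sinh (t / 2) / cosh (t / 2) ^ s with hK
  have hpos {u v : ℝ} (hu : |u| ≤ 1) (hv : |v| ≤ 1) := one_sub_mul_sub_mul_pos hz0 hw0 hzw hu hv
  have hI1 : ∫ v, (∫ u in Ioo (-1 : ℝ) 1,
      (-(deriv (fun u' => Psi α β t θ φ u' v) u)) * PiFun α u) ∂PiMeas β =
      K * ∫ v, (∫ u in Ioo (-1 : ℝ) 1,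
          -(s * z * (1 - u * z - v * w) ^ (-(s + 1))) * PiFun α u) ∂PiMeas β := by
    rw [← integral_const_mul]
    refine integral_congr_ae ?_
    filter_upwards [ae_PiMeas_abs_le_one β] with v hv
    rw [← integral_const_mul]
    refine setIntegral_congr_fun measurableSet_Ioo fun u hu => ?_
    have hu' {x : ℝ} (hx : x ∈ Ioo (-1 : ℝ) 1) : |x| ≤ 1 := abs_le.2 ⟨hx.1.le, hx.2.le⟩
    have heq : (fun u' => Psi α β t θ φ u' v) =ᶠ[nhds u]
        fun u' => K * (1 - u' * z - v * w) ^ (-s) := by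
      filter_upwards [isOpen_Ioo.mem_nhds hu] with x hx
      exact Psi_eq hz hw (hpos (hu' hx) hv)
    rw [heq.deriv_eq, ((hasDerivAt_one_sub_mul_rpow (hpos (hu' hu) hv)).const_mul K).deriv]
    ring
  have hI2 : ∫ v, (∫ u, Psi α β t θ φ u v ∂PiMeas (-(1 / 2))) ∂PiMeas β =
      K * ∫ v, ∫ u, (1 - u * z - v * w) ^ (-s) ∂PiMeas (-(1 / 2)) ∂PiMeas β := by
    rw [← integral_const_mul]
    refine integral_congr_ae ?_
    filter_upwards [ae_PiMeas_abs_le_one β] with v hv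
    rw [← integral_const_mul]
    refine integral_congr_ae ?_
    filter_upwards [ae_PiMeas_abs_le_one (-(1 / 2))] with u hu
    exact Psi_eq hz hw (hpos hu hv)
  have hF := F4_eq_of_hasSum hα₁ hα₂ hβ (hasSum_regularizedMoment hα₁ hα₂ hβ hs hz0 hw0 hzw)
  rw [hI1, hI2, ← mul_add, ← hF, Hker, ← hz, ← hw, hK, hs_def,
    show α + β + 2 + 1 = α + β + 3 by ring]
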